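/- Let E, F be finite sets of variables, x a variable with x ∈ F, and S, K ∈ ℕ with S > 0. Then B(E, S) ≤_T A(F, x, K) if and only if F ⊆ E and S ≤ K + 1. -/

import Mathlib

/-- The impredicative maximum on natural numbers. -/
def imaxN : ℕ → ℕ → ℕ
  | _, 0 => 0
  | i, (j+1) => max i (j+1)

/-- Sublevels A(E,x,S) and B(E,S). -/
inductive SubLvl where
  | A : Finset ℕ → ℕ → ℕ → SubLvl
  | B : Finset ℕ → ℕ → SubLvl
deriving DecidableEq

/-- Value of a sublevel under a valuation. -/
def evalS (σ : ℕ → ℕ) : SubLvl → ℕ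
  | .A E x S => if ∃ y ∈ E, σ y = 0 then 0 else σ x + S
  | .B E S => if ∃ y ∈ E, σ y = 0 then 0 else S

/-- Wellformed sublevels. -/
def Wf : SubLvl → Prop
  | .A E x _ => x ∈ E
  | .B _ S => 0 < S

/-- Semantic comparison of sublevels. -/
def leT (u v : SubLvl) : Prop := ∀ σ : ℕ → ℕ, evalS σ u ≤ evalS σ v

/-!
A wellformed sublevel vanishes exactly when one of its guarding variables does. Hence `u ≤_T v`
forces every guard `y` of `v` to guard `u`: otherwise the valuation that is `0` at `y` and `1`
elsewhere kills `v` but not `u`. Where `A(F, x, K)` is alive and `x ∈ F`, its least value is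
`1 + K`, attained at the constant valuation `1`; so a constant `S` is bounded by it iff
`S ≤ K + 1`.
-/

namespace SubLvl

/-- The set `E` of variables guarding `A(E, x, S)` or `B(E, S)`: the sublevel evaluates to `0` as
soon as one of them does. The variable `x` counts only if it belongs to `E`. -/
def guard : SubLvl → Finset ℕ
  | A E _ _ => E
  | B E _ => E

end SubLvl

section Evaluation

variable {σ : ℕ → ℕ} {E : Finset ℕ} {u : SubLvl}

theorem evalS_A_of_forall_ne_zero (hσ : ∀ y ∈ E, σ y ≠ 0) (x S : ℕ) :
    evalS σ (.A E x S) = σ x + S :=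
  if_neg fun ⟨y, hy, hy0⟩ => hσ y hy hy0

theorem evalS_B_of_forall_ne_zero (hσ : ∀ y ∈ E, σ y ≠ 0) (S : ℕ) :
    evalS σ (.B E S) = S :=
  if_neg fun ⟨y, hy, hy0⟩ => hσ y hy hy0

theorem evalS_eq_zero_of_mem_guard {y : ℕ} (hy : y ∈ u.guard) (hy0 : σ y = 0) :
    evalS σ u = 0 := by
  cases u <;> exact if_pos ⟨y, hy, hy0⟩

theorem evalS_pos_of_forall_guard_ne_zero (hu : Wf u) (hσ : ∀ y ∈ u.guard, σ y ≠ 0) :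
    0 < evalS σ u := by
  cases u with
  | A E x S =>
    rw [evalS_A_of_forall_ne_zero (E := E) hσ]
    exact Nat.add_pos_left (Nat.pos_of_ne_zero (hσ x hu)) S
  | B E S =>
    rw [evalS_B_of_forall_ne_zero (E := E) hσ]
    exact hu

end Evaluation

section Comparison

variable {u v : SubLvl}

theorem leT_of_forall_guard_ne_zero
    (h : ∀ σ : ℕ → ℕ, (∀ y ∈ u.guard, σ y ≠ 0) → evalS σ u ≤ evalS σ v) : leT u v := by
  intro σ
  by_cases hσ : ∀ y ∈ u.guard, σ y ≠ 0
  · exact h σ hσ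
  · push Not at hσ
    obtain ⟨y, hy, hy0⟩ := hσ
    exact (evalS_eq_zero_of_mem_guard hy hy0).trans_le (Nat.zero_le _)

theorem guard_subset_of_leT (hu : Wf u) (h : leT u v) : v.guard ⊆ u.guard := by
  intro y hyv
  by_contra hyu
  let σ : ℕ → ℕ := Function.update 1 y 0
  have hσ : ∀ z ∈ u.guard, σ z ≠ 0 := by
    intro z hz
    have hzy : z ≠ y := ne_of_mem_of_not_mem hz hyu
    simp [σ, hzy]
  have hu_pos : 0 < evalS σ u := evalS_pos_of_forall_guard_ne_zero hu hσ
  have hv_zero : evalS σ v = 0 := evalS_eq_zero_of_mem_guard hyv (Function.update_self y 0 1)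
  exact (hu_pos.trans_le (h σ)).ne' hv_zero

theorem le_add_one_of_B_leT_A {E F : Finset ℕ} {x S K : ℕ} (h : leT (.B E S) (.A F x K)) :
    S ≤ K + 1 := by
  have one_ne_zero_of_mem (G : Finset ℕ) : ∀ y ∈ G, (1 : ℕ → ℕ) y ≠ 0 := fun _ _ => one_ne_zero
  calc
    S = evalS 1 (.B E S) := (evalS_B_of_forall_ne_zero (one_ne_zero_of_mem E) S).symm
    _ ≤ evalS 1 (.A F x K) := h 1
    _ = 1 + K := evalS_A_of_forall_ne_zero (one_ne_zero_of_mem F) x K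
    _ = K + 1 := Nat.add_comm 1 K

theorem B_leT_A_of_subset_of_le {E F : Finset ℕ} {x S K : ℕ} (hx : x ∈ E) (hFE : F ⊆ E)
    (hSK : S ≤ K + 1) : leT (.B E S) (.A F x K) := by
  refine leT_of_forall_guard_ne_zero fun σ (hσ : ∀ y ∈ E, σ y ≠ 0) => ?_
  have hσx : 1 ≤ σ x := Nat.one_le_iff_ne_zero.mpr (hσ x hx)
  calc
    evalS σ (.B E S) = S := evalS_B_of_forall_ne_zero hσ S
    _ ≤ σ x + K := by omega
    _ = evalS σ (.A F x K) := (evalS_A_of_forall_ne_zero (fun y hy => hσ y (hFE hy)) x K).symm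

end Comparison

theorem B_le_A_iff (E F : Finset ℕ) (x : ℕ) (hx : x ∈ F) (S K : ℕ) (hS : 0 < S) :
    leT (SubLvl.B E S) (SubLvl.A F x K) ↔ F ⊆ E ∧ S ≤ K + 1 := by
  constructor
  · intro h
    have hB : Wf (.B E S) := hS
    exact ⟨guard_subset_of_leT hB h, le_add_one_of_B_leT_A h⟩
  · rintro ⟨hFE, hSK⟩
    exact B_leT_A_of_subset_of_le (hFE hx) hFE hSK
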